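/- The entire function Δ₂ has infinitely many zeros accumulating near the half-integers: there exist N ∈ ℕ and a sequence (λ_n)_{n ∈ ℤ, |n| ≥ N} of complex numbers such that for every n with |n| ≥ N, λ_n is the unique zero of Δ₂ in the disk {λ ∈ ℂ : |λ − (n − 1/2)| < 1/2}, and λ_n = n − 1/2 + κ_n with κ_n → 0 as |n| → ∞. -/

import Mathlib

open MeasureTheory Real Set Filter

noncomputable def Delta2 (a₁ : ℝ) (K G : ℝ → ℂ) (lam : ℂ) : ℂ :=
  -Complex.cos (π * lam)
    + (∫ x in (a₁ / 2)..(π - a₁ / 2), K x * Complex.sin (lam * ((π - 2 * x : ℝ) : ℂ)))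
    + ∫ x in (a₁ / 2)..(π - a₁ / 2), G x * Complex.cos (lam * ((π - 2 * x : ℝ) : ℂ))

/-!
The function `Δ₂` is `-cos (π λ)` plus a remainder which, by the Riemann–Lebesgue lemma, tends to
`0` at both ends of every horizontal strip, uniformly in `Im λ`. The zeros `n - 1/2` of `cos (π λ)`
are simple, and recentring at one of them turns `cos (π λ)` into `± sin (π z)`, the same function
for every `n` up to sign. A simple zero is stable under small holomorphic perturbations, hence each
disk of radius `1/2` about `n - 1/2` with `|n|` large contains exactly one zero of `Δ₂`, and this
zero approaches the centre.
-/

open Metric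
open scoped Interval Topology

section StabilityOfSimpleZeros

lemma eventually_mul_dist_le {𝕜 E : Type*} [NontriviallyNormedField 𝕜]
    [NormedAddCommGroup E] [NormedSpace 𝕜 E] {f : 𝕜 → E} {f' : E} {c : 𝕜} {m : ℝ}
    (hf : HasStrictDerivAt f f' c) (hm : m < ‖f'‖) :
    ∀ᶠ p in 𝓝 (c, c), m * dist p.1 p.2 ≤ dist (f p.1) (f p.2) := by
  filter_upwards [hf.hasStrictFDerivAt.isLittleO.def (sub_pos.2 hm)] with p hp
  have hlin : ‖f'‖ * ‖p.1 - p.2‖ - ‖f p.1 - f p.2‖ ≤ (‖f'‖ - m) * ‖p.1 - p.2‖ := by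
    refine le_trans ?_ hp
    rw [norm_sub_rev (f p.1 - f p.2), mul_comm, ← norm_smul]
    exact norm_sub_norm_le _ _
  rw [dist_eq_norm, dist_eq_norm]
  linarith

lemma dist_le_mul_dist_of_norm_le {E : Type*} [NormedAddCommGroup E] [NormedSpace ℂ E]
    {e : ℂ → E} {c : ℂ} {r δ : ℝ} (he : DifferentiableOn ℂ e (ball c (3 * r)))
    (hδ : ∀ z ∈ ball c (3 * r), ‖e z‖ ≤ δ) {z w : ℂ} (hz : z ∈ ball c r) (hw : w ∈ ball c r) :
    dist (e z) (e w) ≤ δ / r * dist z w := by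
  have hr : 0 < r := pos_of_mem_ball hz
  have hsub : ball w (2 * r) ⊆ ball c (3 * r) :=
    ball_subset_ball' (by linarith [mem_ball.1 hw])
  have hmaps : MapsTo e (ball w (2 * r)) (closedBall (e w) (2 * δ)) := fun u hu => by
    rw [mem_closedBall, dist_eq_norm, two_mul]
    exact norm_sub_le_of_le (hδ u (hsub hu)) (hδ w (hsub (mem_ball_self (by positivity))))
  have hzw : z ∈ ball w (2 * r) := by
    rw [mem_ball] at *
    linarith [dist_triangle_right z w c]
  refine (Complex.dist_le_div_mul_dist_of_mapsTo_ball (he.mono hsub) hmaps hzw).trans_eq ?_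
  rw [mul_div_mul_left _ _ two_ne_zero]

lemma existsUnique_zero_of_mul_dist_le {f : ℂ → ℂ} {c : ℂ} {m r : ℝ}
    (hf : DifferentiableOn ℂ f (ball c r)) (hm : 0 < m)
    (hanti : ∀ z ∈ ball c r, ∀ w ∈ ball c r, m * dist z w ≤ dist (f z) (f w))
    (hc : ‖f c‖ < m * r / 4) : ∃! z, z ∈ ball c r ∧ f z = 0 := by
  have hr : 0 < r := (mul_pos_iff_of_pos_left hm).1 (by linarith [norm_nonneg (f c)])
  have hinj : InjOn f (ball c r) := fun z hz w hw h => by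
    have := hanti z hz w hw
    rw [h, dist_self] at this
    exact dist_le_zero.1 (nonpos_of_mul_nonpos_right this hm)
  have hsub : closedBall c (r / 2) ⊆ ball c r := closedBall_subset_ball (half_lt_self hr)
  have hcr : c ∈ ball c r := mem_ball_self hr
  have hsphere : ∀ z ∈ sphere c (r / 2), m * r / 2 ≤ ‖f z - f c‖ := fun z hz => by
    have := hanti z (hsub (sphere_subset_closedBall hz)) c hcr
    rwa [mem_sphere.1 hz, dist_eq_norm, ← mul_div_assoc] at this
  have hne : ∃ᶠ z in 𝓝 c, f z ≠ f c := by
    have hnhds : ∀ᶠ z in 𝓝[≠] c, f z ≠ f c := by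
      filter_upwards [self_mem_nhdsWithin, nhdsWithin_le_nhds (ball_mem_nhds c hr)] with z hzc hz
      exact fun h => hzc (hinj hz hcr h)
    exact hnhds.frequently.filter_mono nhdsWithin_le_nhds
  have hzero : (0 : ℂ) ∈ ball (f c) (m * r / 2 / 2) := by
    rw [mem_ball, dist_zero_left]
    linarith
  obtain ⟨z, hz, hfz⟩ := (hf.mono hsub).diffContOnCl_ball subset_rfl
    |>.ball_subset_image_closedBall (half_pos hr) hsphere hne hzero
  exact ⟨z, ⟨hsub hz, hfz⟩, fun w hw => hinj hw.1 (hsub hz) (hw.2.trans hfz.symm)⟩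

lemma existsUnique_eq_of_mul_dist_le {h e : ℂ → ℂ} {c : ℂ} {m s δ : ℝ}
    (hh : DifferentiableOn ℂ h (ball c s)) (hm : 0 < m) (hs : 0 < s) (hc : h c = 0)
    (hanti : ∀ z ∈ ball c s, ∀ w ∈ ball c s, m * dist z w ≤ dist (h z) (h w))
    (he : DifferentiableOn ℂ e (ball c (3 * s))) (heδ : ∀ z ∈ ball c (3 * s), ‖e z‖ ≤ δ)
    (hδ : δ < m * s / 8) : ∃! z, z ∈ ball c s ∧ h z = e z := by
  have hsub : ball c s ⊆ ball c (3 * s) := ball_subset_ball (by linarith)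
  have hδs : δ / s ≤ m / 2 := by
    rw [div_le_iff₀ hs]
    linarith [mul_pos hm hs]
  -- By the Schwarz lemma `e` is `m / 2`-Lipschitz near `c`, so `h - e` inherits half of the
  -- expansion of `h`.
  have hdiff : ∀ z ∈ ball c s, ∀ w ∈ ball c s,
      m / 2 * dist z w ≤ dist (h z - e z) (h w - e w) := fun z hz w hw => by
    have hhw := hanti z hz w hw
    have hew := (dist_le_mul_dist_of_norm_le he heδ hz hw).trans
      (mul_le_mul_of_nonneg_right hδs dist_nonneg)
    have htri : dist (h z) (h w) ≤ dist (h z - e z) (h w - e w) + dist (e z) (e w) := by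
      simpa using dist_add_add_le (h z - e z) (e z) (h w - e w) (e w)
    linarith
  have hsmall : ‖h c - e c‖ < m / 2 * s / 4 := by
    rw [hc, zero_sub, norm_neg]
    linarith [heδ c (hsub (mem_ball_self hs))]
  simpa only [Pi.sub_apply, sub_eq_zero] using existsUnique_zero_of_mul_dist_le
    (hh.sub (he.mono hsub)) (half_pos hm) hdiff hsmall

variable {h : ℂ → ℂ} {c : ℂ} {r : ℝ}

theorem exists_forall_sep_eq_singleton_of_norm_le (hr : 0 < r) (hh : DiffContOnCl ℂ h (ball c r))
    (hzero : ∀ z ∈ closedBall c r, h z = 0 ↔ z = c) (hsimple : deriv h c ≠ 0) {ε : ℝ}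
    (hε : 0 < ε) :
    ∃ δ > 0, ∀ e : ℂ → ℂ, DifferentiableOn ℂ e (ball c r) → (∀ z ∈ ball c r, ‖e z‖ ≤ δ) →
      ∃ z ∈ ball c ε, {w ∈ ball c r | h w = e w} = {z} := by
  have hstrict : HasStrictDerivAt h (deriv h c) c :=
    (hh.differentiableOn.analyticAt (ball_mem_nhds c hr)).hasStrictDerivAt
  have hm : 0 < ‖deriv h c‖ / 2 := by positivity
  obtain ⟨s₀, hs₀, hanti⟩ := eventually_nhds_iff_ball.1
    (eventually_mul_dist_le hstrict (half_lt_self (norm_pos_iff.2 hsimple)))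
  simp only [← ball_prod_same, Prod.forall, mem_prod, and_imp] at hanti
  generalize ‖deriv h c‖ / 2 = m at hm hanti
  obtain ⟨s, hs, hss₀, hsε, hsr⟩ : ∃ s > 0, s ≤ s₀ ∧ s ≤ ε ∧ 3 * s ≤ r :=
    ⟨min s₀ (min ε (r / 3)), by positivity, by simp, by simp, by
      linarith [min_le_right s₀ (min ε (r / 3)), min_le_right ε (r / 3)]⟩
  obtain ⟨μ, hμ, hfar⟩ := ((isCompact_closedBall c r).diff isOpen_ball).exists_forall_le'
    (hh.continuousOn_ball.mono sdiff_subset).norm (a := 0) (s := closedBall c r \ ball c s)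
    fun z hz => norm_pos_iff.2 fun hz0 =>
      hz.2 (((hzero z hz.1).1 hz0).symm ▸ mem_ball_self hs)
  obtain ⟨δ, hδ, hδlt⟩ := exists_between (lt_min (show 0 < m * s / 8 by positivity) hμ)
  obtain ⟨hδm, hδμ⟩ := lt_min_iff.1 hδlt
  refine ⟨δ, hδ, fun e he heδ => ?_⟩
  have hsub : ball c (3 * s) ⊆ ball c r := ball_subset_ball hsr
  have hsub' : ball c s ⊆ ball c r := ball_subset_ball (by linarith)
  obtain ⟨z, ⟨hz, hhz⟩, huniq⟩ := existsUnique_eq_of_mul_dist_le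
    (hh.differentiableOn.mono hsub') hm hs ((hzero c (mem_closedBall_self hr.le)).2 rfl)
    (fun z hz w hw => hanti z w (ball_subset_ball hss₀ hz) (ball_subset_ball hss₀ hw))
    (he.mono hsub) (fun z hz => heδ z (hsub hz)) hδm
  refine ⟨z, ball_subset_ball hsε hz, eq_singleton_iff_unique_mem.2
    ⟨⟨hsub' hz, hhz⟩, fun w ⟨hw, hhw⟩ => huniq w ⟨?_, hhw⟩⟩⟩
  by_contra hws
  have := hfar w ⟨ball_subset_closedBall hw, hws⟩
  rw [hhw] at this
  linarith [heδ w hw]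

theorem exists_tendsto_eventually_sep_eq_singleton {ι : Type*} {l : Filter ι} {e : ι → ℂ → ℂ}
    (hr : 0 < r) (hh : DiffContOnCl ℂ h (ball c r))
    (hzero : ∀ z ∈ closedBall c r, h z = 0 ↔ z = c) (hsimple : deriv h c ≠ 0)
    (he : ∀ i, DifferentiableOn ℂ (e i) (ball c r)) (hlim : TendstoUniformlyOn e 0 l (ball c r)) :
    ∃ z : ι → ℂ, Tendsto z l (𝓝 c) ∧ ∀ᶠ i in l, {w ∈ ball c r | h w = e i w} = {z i} := by
  have hnear : ∀ ε > 0, ∀ᶠ i in l, ∃ z ∈ ball c ε, {w ∈ ball c r | h w = e i w} = {z} :=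
    fun ε hε => by
      obtain ⟨δ, hδ, hroot⟩ := exists_forall_sep_eq_singleton_of_norm_le hr hh hzero hsimple hε
      filter_upwards [Metric.tendstoUniformlyOn_iff.1 hlim δ hδ] with i hi
      exact hroot (e i) (he i) fun z hz => by simpa using (hi z hz).le
  choose! z hz using fun i (hi : ∃ z, {w ∈ ball c r | h w = e i w} = {z}) => hi
  refine ⟨z, nhds_basis_ball.tendsto_right_iff.2 fun ε hε => ?_, ?_⟩
  · filter_upwards [hnear ε hε] with i ⟨w, hwε, hw⟩
    rwa [← singleton_injective (hw.symm.trans (hz i ⟨w, hw⟩))]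
  · filter_upwards [hnear 1 one_pos] with i ⟨w, _, hw⟩
    exact hz i ⟨w, hw⟩

end StabilityOfSimpleZeros

section RiemannLebesgue

theorem tendsto_intervalIntegral_exp_smul_cocompact {E : Type*} [NormedAddCommGroup E]
    [NormedSpace ℂ E] (f : ℝ → E) (a b : ℝ) :
    Tendsto (fun ξ : ℝ => ∫ t in a..b, Complex.exp (ξ * t * Complex.I) • f t)
      (cocompact ℝ) (𝓝 0) := by
  have hscale : Tendsto (fun ξ : ℝ => ξ * -(2 * π)⁻¹) (cocompact ℝ) (cocompact ℝ) :=
    (Homeomorph.mulRight₀ _ (neg_ne_zero.2 (by positivity))).map_cocompact.le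
  have hlim := ((Real.tendsto_integral_exp_smul_cocompact ((Ι a b).indicator f)).comp hscale).norm
  rw [norm_zero] at hlim
  refine tendsto_zero_iff_norm_tendsto_zero.2 (hlim.congr fun ξ => ?_)
  rw [intervalIntegral.norm_intervalIntegral_eq, ← integral_indicator measurableSet_uIoc,
    Function.comp_apply]
  congr 2 with t
  rw [indicator_smul_apply, Circle.smul_def, Real.fourierChar_apply]
  congr 3
  push_cast
  field_simp

-- This is the Riemann–Lebesgue lemma in the Banach space `C(X, ℂ)`: convergence in its norm is
-- the uniformity in `x`.
theorem tendstoUniformly_intervalIntegral_mul_exp {X : Type*} [TopologicalSpace X]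
    [CompactSpace X] {w : ℝ → ℂ} {a b : ℝ} (hw : IntervalIntegrable w volume a b)
    (φ : C(ℝ, C(X, ℂ))) :
    TendstoUniformly
      (fun (ξ : ℝ) (x : X) => ∫ t in a..b, w t * (φ t x * Complex.exp (ξ * t * Complex.I)))
      0 (cocompact ℝ) := by
  have hint (ξ : ℝ) : IntervalIntegrable
      (fun t => Complex.exp (ξ * t * Complex.I) • w t • φ t) volume a b :=
    (hw.smul_continuousOn φ.continuous.continuousOn).continuousOn_smul
      (by fun_prop : Continuous fun t : ℝ => Complex.exp (ξ * t * Complex.I)).continuousOn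
  have heval (ξ : ℝ) (x : X) : ∫ t in a..b, w t * (φ t x * Complex.exp (ξ * t * Complex.I)) =
      (∫ t in a..b, Complex.exp (ξ * t * Complex.I) • w t • φ t) x := by
    rw [← ContinuousMap.evalCLM_apply ℂ,
      ← ContinuousLinearMap.intervalIntegral_comp_comm _ (hint ξ)]
    simp only [ContinuousMap.evalCLM_apply, ContinuousMap.smul_apply, smul_eq_mul]
    congr with t
    ring
  simp only [heval]
  exact ContinuousMap.tendsto_iff_tendstoUniformly.1
    (tendsto_intervalIntegral_exp_smul_cocompact (fun t => w t • φ t) a b)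

/-- The filter of neighbourhoods of the two ends of the horizontal strip `|Im z| ≤ R`. A limit along
it is a limit as `|Re z| → ∞` that is uniform in the imaginary part. -/
def stripEnds (R : ℝ) : Filter ℂ :=
  comap Complex.re (cocompact ℝ) ⊓ 𝓟 {z | |z.im| ≤ R}

variable {w : ℝ → ℂ} {a b : ℝ}

theorem tendsto_intervalIntegral_mul_exp_stripEnds (hw : IntervalIntegrable w volume a b)
    (c : ℝ) {d : ℝ} (hd : d ≠ 0) (R : ℝ) :
    Tendsto (fun z : ℂ => ∫ t in a..b, w t * Complex.exp (z * ((c + d * t : ℝ) : ℂ) * Complex.I))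
      (stripEnds R) (𝓝 0) := by
  let φ : C(ℝ, C(Icc (-R) R, ℂ)) := ContinuousMap.curry
    ⟨fun p => Complex.exp (-p.2 * ((c + d * p.1 : ℝ) : ℂ)), by fun_prop⟩
  have hunif := tendstoUniformly_intervalIntegral_mul_exp hw φ
  have hscale : Tendsto (fun ξ : ℝ => d * ξ) (cocompact ℝ) (cocompact ℝ) :=
    (Homeomorph.mulLeft₀ d hd).map_cocompact.le
  refine Metric.tendsto_nhds.2 fun ε hε => ?_
  have hre : ∀ᶠ ξ in cocompact ℝ, ∀ y : Icc (-R) R,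
      ‖∫ t in a..b, w t * (φ t y * Complex.exp ((d * ξ : ℝ) * t * Complex.I))‖ < ε := by
    simpa using hscale.eventually (Metric.tendstoUniformly_iff.1 hunif ε hε)
  filter_upwards [mem_inf_of_left (preimage_mem_comap hre), mem_inf_of_right (mem_principal_self _)]
    with z hz him
  have hphase (t : ℝ) : w t * Complex.exp (z * ((c + d * t : ℝ) : ℂ) * Complex.I) =
      Complex.exp ((z.re * c : ℝ) * Complex.I) *
        (w t * (φ t ⟨z.im, abs_le.1 him⟩ * Complex.exp ((d * z.re : ℝ) * t * Complex.I))) := by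
    rw [mul_left_comm, ContinuousMap.curry_apply, ContinuousMap.coe_mk, ← Complex.exp_add,
      ← Complex.exp_add]
    congr 2
    push_cast
    linear_combination (z.im * (c + d * t) : ℂ) * Complex.I_sq -
      (c + d * t) * Complex.I * Complex.re_add_im z
  simp only [hphase, intervalIntegral.integral_const_mul, dist_zero_right, norm_mul,
    Complex.norm_exp_ofReal_mul_I, one_mul]
  exact hz _

theorem tendsto_intervalIntegral_mul_sin_stripEnds (hw : IntervalIntegrable w volume a b)
    (c : ℝ) {d : ℝ} (hd : d ≠ 0) (R : ℝ) :
    Tendsto (fun z : ℂ => ∫ t in a..b, w t * Complex.sin (z * ((c + d * t : ℝ) : ℂ)))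
      (stripEnds R) (𝓝 0) := by
  have hlim := ((tendsto_intervalIntegral_mul_exp_stripEnds hw (-c) (neg_ne_zero.2 hd) R).sub
    (tendsto_intervalIntegral_mul_exp_stripEnds hw c hd R)).mul_const (Complex.I / 2)
  rw [sub_zero, zero_mul] at hlim
  refine hlim.congr fun z => ?_
  rw [← intervalIntegral.integral_sub
    (hw.mul_continuousOn (by fun_prop)) (hw.mul_continuousOn (by fun_prop)),
    ← intervalIntegral.integral_mul_const]
  congr with t
  rw [Complex.sin, ← mul_sub, mul_assoc, mul_div_assoc]
  congr 4
  push_cast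
  ring_nf

theorem tendsto_intervalIntegral_mul_cos_stripEnds (hw : IntervalIntegrable w volume a b)
    (c : ℝ) {d : ℝ} (hd : d ≠ 0) (R : ℝ) :
    Tendsto (fun z : ℂ => ∫ t in a..b, w t * Complex.cos (z * ((c + d * t : ℝ) : ℂ)))
      (stripEnds R) (𝓝 0) := by
  have hlim := ((tendsto_intervalIntegral_mul_exp_stripEnds hw c hd R).add
    (tendsto_intervalIntegral_mul_exp_stripEnds hw (-c) (neg_ne_zero.2 hd) R)).div_const 2
  rw [add_zero, zero_div] at hlim
  refine hlim.congr fun z => ?_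
  rw [← intervalIntegral.integral_add
    (hw.mul_continuousOn (by fun_prop)) (hw.mul_continuousOn (by fun_prop)),
    ← intervalIntegral.integral_div]
  congr with t
  rw [Complex.cos, ← mul_add, mul_div_assoc]
  congr 4
  push_cast
  ring_nf

end RiemannLebesgue

section ParametricIntegral

theorem differentiable_intervalIntegral_mul {w : ℝ → ℂ} {a b : ℝ} {k k' : ℂ → ℝ → ℂ}
    (hw : IntervalIntegrable w volume a b)
    (hk : Continuous (Function.uncurry k)) (hk' : Continuous (Function.uncurry k'))
    (hderiv : ∀ z t, HasDerivAt (k · t) (k' z t) z) :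
    Differentiable ℂ fun z => ∫ t in a..b, w t * k z t := by
  intro z
  obtain ⟨M, hM⟩ := ((isCompact_closedBall z 1).prod isCompact_uIcc).exists_bound_of_continuousOn
    hk'.continuousOn (s := closedBall z 1 ×ˢ [[a, b]])
  have hint {f : ℂ → ℝ → ℂ} (hf : Continuous (Function.uncurry f)) (u : ℂ) :
      IntervalIntegrable (fun t => w t * f u t) volume a b :=
    hw.mul_continuousOn (hf.comp (by fun_prop : Continuous fun t => (u, t))).continuousOn
  refine (intervalIntegral.hasDerivAt_integral_of_dominated_loc_of_deriv_le
    (bound := fun t => ‖w t‖ * M) (ball_mem_nhds z one_pos)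
    (.of_forall fun u => (hint hk u).def'.aestronglyMeasurable) (hint hk z)
    (hint hk' z).def'.aestronglyMeasurable (.of_forall fun t ht u hu => ?_)
    (hw.norm.mul_const M)
    (.of_forall fun t _ u _ => (hderiv u t).const_mul (w t))).2.differentiableAt
  rw [norm_mul]
  gcongr
  exact hM (u, t) ⟨ball_subset_closedBall hu, uIoc_subset_uIcc ht⟩

end ParametricIntegral

section ZerosNearHalfIntegers

lemma cos_pi_mul_int_sub_half_add (n : ℤ) (z : ℂ) :
    Complex.cos (π * ((n - 1 / 2 : ℂ) + z)) = (-1) ^ n * Complex.sin (π * z) := by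
  rw [show (π : ℂ) * ((n - 1 / 2 : ℂ) + z) = (π * z - π / 2) + n * π by ring,
    ← Complex.cos_sub_pi_div_two]
  exact n.cast_negOnePow ℂ ▸ Complex.cos_antiperiodic.add_int_mul_eq n

lemma sin_pi_mul_eq_zero_iff_of_mem_closedBall {z : ℂ} (hz : z ∈ closedBall (0 : ℂ) (1 / 2)) :
    Complex.sin (π * z) = 0 ↔ z = 0 := by
  refine ⟨fun h => ?_, fun h => by simp [h]⟩
  obtain ⟨k, hk⟩ := Complex.sin_eq_zero_iff.1 h
  obtain rfl : z = k := mul_left_cancel₀ (mod_cast Real.pi_ne_zero)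
    (hk.trans (mul_comm _ _))
  have hk1 : |k| < 1 := by
    rw [mem_closedBall_zero_iff, Complex.norm_intCast] at hz
    exact_mod_cast hz.trans_lt one_half_lt_one
  rw [Int.abs_lt_one_iff.1 hk1, Int.cast_zero]

lemma tendsto_int_sub_half_add_stripEnds (R : ℝ) :
    Tendsto (fun p : ℤ × ℂ => (p.1 - 1 / 2 : ℂ) + p.2)
      (cofinite ×ˢ 𝓟 (ball 0 R)) (stripEnds R) := by
  have hball : ∀ᶠ p in (cofinite : Filter ℤ) ×ˢ 𝓟 (ball (0 : ℂ) R), ‖p.2‖ < R :=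
    eventually_prod_principal_iff.2 (.of_forall fun _ _ => mem_ball_zero_iff.1)
  refine tendsto_inf.2 ⟨tendsto_comap_iff.2 ?_, tendsto_principal.2 ?_⟩
  · rw [← cobounded_eq_cocompact, ← tendsto_norm_atTop_iff_cobounded]
    refine tendsto_atTop_mono' _ (hball.mono fun p hp => ?_)
      (tendsto_atTop_add_const_right _ (-(1 / 2 + R))
        ((tendsto_norm_cocompact_atTop.comp Int.tendsto_coe_cofinite).comp tendsto_fst))
    have hre : |p.2.re| < R := (Complex.abs_re_le_norm p.2).trans_lt hp
    have hle : |1 / 2 - p.2.re| ≤ 1 / 2 + R := by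
      rw [abs_lt] at hre
      exact abs_le.2 ⟨by linarith, by linarith⟩
    have hval : ((p.1 - 1 / 2 : ℂ) + p.2).re = p.1 - (1 / 2 - p.2.re) := by
      simp [sub_add]
    calc ‖(p.1 : ℝ)‖ + -(1 / 2 + R) ≤ |(p.1 : ℝ)| - |1 / 2 - p.2.re| := by
          rw [Real.norm_eq_abs]
          linarith
      _ ≤ ‖((p.1 - 1 / 2 : ℂ) + p.2).re‖ := hval ▸ abs_sub_abs_le_abs_sub _ _
  · filter_upwards [hball] with p hp
    simpa using (Complex.abs_im_le_norm p.2).trans hp.le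

lemma exists_nat_forall_le_abs_of_eventually_cofinite {p : ℤ → Prop} (hp : ∀ᶠ n in cofinite, p n) :
    ∃ N : ℕ, ∀ n : ℤ, (N : ℤ) ≤ |n| → p n := by
  obtain ⟨M, hM⟩ := ((eventually_cofinite.1 hp).image Int.natAbs).bddAbove
  refine ⟨M + 1, fun n hn => by_contra fun hpn => ?_⟩
  have : n.natAbs ≤ M := hM ⟨n, hpn, rfl⟩
  rw [Int.abs_eq_natAbs] at hn
  omega

variable {F : ℂ → ℂ}

lemma neg_cos_pi_mul_add_eq_zero_iff (n : ℤ) (z : ℂ) :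
    -Complex.cos (π * ((n - 1 / 2 : ℂ) + z)) + F ((n - 1 / 2 : ℂ) + z) = 0 ↔
      Complex.sin (π * z) = (-1) ^ n * F ((n - 1 / 2 : ℂ) + z) := by
  rw [cos_pi_mul_int_sub_half_add, neg_add_eq_zero]
  have hsign : ((-1 : ℂ) ^ n) * (-1) ^ n = 1 := by rw [← mul_zpow]; simp
  constructor <;> intro h
  · rw [← h, ← mul_assoc, hsign, one_mul]
  · rw [h, ← mul_assoc, hsign, one_mul]

lemma tendstoUniformlyOn_neg_one_zpow_mul_shift {R : ℝ}
    (hlim : Tendsto F (stripEnds R) (𝓝 0)) :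
    TendstoUniformlyOn (fun (n : ℤ) z => (-1) ^ n * F ((n - 1 / 2 : ℂ) + z)) 0 cofinite
      (ball 0 R) := by
  have hcomp := hlim.comp (tendsto_int_sub_half_add_stripEnds R)
  refine Metric.tendstoUniformlyOn_iff.2 fun ε hε => ?_
  simpa using eventually_prod_principal_iff.1 (Metric.tendsto_nhds.1 hcomp ε hε)

theorem exists_sep_neg_cos_pi_mul_add_eq_singleton (hF : Differentiable ℂ F)
    (hlim : Tendsto F (stripEnds (1 / 2)) (𝓝 0)) :
    ∃ (N : ℕ) (lam : ℤ → ℂ),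
      (∀ n : ℤ, (N : ℤ) ≤ |n| →
        {z ∈ ball (n - 1 / 2 : ℂ) (1 / 2) | -Complex.cos (π * z) + F z = 0} = {lam n}) ∧
      Tendsto (fun n : ℤ => lam n - (n - 1 / 2 : ℂ)) cofinite (𝓝 0) := by
  have hsin : Differentiable ℂ fun z : ℂ => Complex.sin (π * z) := by fun_prop
  have hsimple : deriv (fun z : ℂ => Complex.sin (π * z)) 0 ≠ 0 := by
    simp [deriv_comp_mul_left]
  have hshift (n : ℤ) : Differentiable ℂ fun z => (-1) ^ n * F ((n - 1 / 2 : ℂ) + z) := by fun_prop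
  obtain ⟨z, hz, hzero⟩ := exists_tendsto_eventually_sep_eq_singleton one_half_pos
    hsin.diffContOnCl (fun _ => sin_pi_mul_eq_zero_iff_of_mem_closedBall) hsimple
    (fun n => (hshift n).differentiableOn) (tendstoUniformlyOn_neg_one_zpow_mul_shift hlim)
  obtain ⟨N, hN⟩ := exists_nat_forall_le_abs_of_eventually_cofinite hzero
  refine ⟨N, fun n => (n - 1 / 2 : ℂ) + z n, fun n hn => ?_, by simpa using hz⟩
  ext μ
  have hμ := Set.ext_iff.1 (hN n hn) (μ - (n - 1 / 2 : ℂ))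
  simp only [mem_ofPred_eq, ← neg_cos_pi_mul_add_eq_zero_iff, add_sub_cancel, mem_singleton_iff,
    sub_eq_iff_eq_add', mem_ball_zero_iff] at hμ
  rwa [mem_ofPred_eq, mem_ball_iff_norm, mem_singleton_iff]

end ZerosNearHalfIntegers

lemma intervalIntegrable_of_memLp_Ioo {E : Type*} [NormedAddCommGroup E] {f : ℝ → E}
    {p : ENNReal} {a b c d : ℝ} (hp : 1 ≤ p) (hf : MemLp f p (volume.restrict (Ioo a b)))
    (hc : c ∈ Icc a b) (hd : d ∈ Icc a b) :
    IntervalIntegrable f volume c d := by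
  have hab : IntegrableOn f (Icc a b) := by
    rw [integrableOn_Icc_iff_integrableOn_Ioo]
    exact hf.integrable hp
  exact intervalIntegrable_iff.2
    (hab.mono_set (uIoc_subset_uIcc.trans (uIcc_subset_Icc hc hd)))

theorem Delta2_eigenvalue_asymptotics_general (a₁ : ℝ) (K G : ℝ → ℂ)
    (hK : IntervalIntegrable K volume (a₁ / 2) (π - a₁ / 2))
    (hG : IntervalIntegrable G volume (a₁ / 2) (π - a₁ / 2)) :
    ∃ (N : ℕ) (lam : ℤ → ℂ),
      (∀ n : ℤ, (N : ℤ) ≤ |n| →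
        Delta2 a₁ K G (lam n) = 0 ∧ ‖lam n - ((n : ℂ) - 1 / 2)‖ < 1 / 2 ∧
        ∀ μ : ℂ, ‖μ - ((n : ℂ) - 1 / 2)‖ < 1 / 2 → Delta2 a₁ K G μ = 0 → μ = lam n) ∧
      Tendsto (fun n : ℤ => lam n - ((n : ℂ) - 1 / 2)) cofinite (𝓝 0) := by
  let F : ℂ → ℂ := fun z =>
    (∫ x in (a₁ / 2)..(π - a₁ / 2), K x * Complex.sin (z * ((π - 2 * x : ℝ) : ℂ))) +
      ∫ x in (a₁ / 2)..(π - a₁ / 2), G x * Complex.cos (z * ((π - 2 * x : ℝ) : ℂ))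
  have hF : Differentiable ℂ F :=
    (differentiable_intervalIntegral_mul hK (by fun_prop) (by fun_prop)
      fun z x => ((hasDerivAt_id z).mul_const _).csin).add
    (differentiable_intervalIntegral_mul hG (by fun_prop) (by fun_prop)
      fun z x => ((hasDerivAt_id z).mul_const _).ccos)
  have hlim : Tendsto F (stripEnds (1 / 2)) (𝓝 0) := by
    simpa [F, sub_eq_add_neg] using
      (tendsto_intervalIntegral_mul_sin_stripEnds hK π (neg_ne_zero.2 two_ne_zero) _).add
      (tendsto_intervalIntegral_mul_cos_stripEnds hG π (neg_ne_zero.2 two_ne_zero) _)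
  obtain ⟨N, lam, hzero, hlam⟩ := exists_sep_neg_cos_pi_mul_add_eq_singleton hF hlim
  refine ⟨N, lam, fun n hn => ?_, hlam⟩
  obtain ⟨⟨hball, hroot⟩, huniq⟩ := eq_singleton_iff_unique_mem.1 (hzero n hn)
  simp only [F, ← add_assoc] at hroot huniq
  exact ⟨hroot, mem_ball_iff_norm.1 hball, fun μ hμ h => huniq μ ⟨mem_ball_iff_norm.2 hμ, h⟩⟩

/-- The entire function `Δ₂` has infinitely many zeros accumulating near the
half-integers: there are `N ∈ ℕ` and complex numbers `λ_n` (`|n| ≥ N`) such that `λ_n`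
is the unique zero of `Δ₂` in the disk `{|λ − (n − 1/2)| < 1/2}`, and
`λ_n = n − 1/2 + κ_n` with `κ_n → 0`. -/
theorem Delta2_eigenvalue_asymptotics (a₁ : ℝ) (ha₁ : 0 < a₁) (ha₁' : a₁ < π)
    (K G : ℝ → ℂ)
    (hK : MemLp K 2 (volume.restrict (Ioo 0 π)))
    (hG : MemLp G 2 (volume.restrict (Ioo 0 π)))
    (hK0 : ∀ᵐ x ∂(volume : Measure ℝ), x ∉ Ioo (a₁ / 2) (π - a₁ / 2) → K x = 0)
    (hG0 : ∀ᵐ x ∂(volume : Measure ℝ), x ∉ Ioo (a₁ / 2) (π - a₁ / 2) → G x = 0) :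
    ∃ (N : ℕ) (lam : ℤ → ℂ),
      (∀ n : ℤ, (N : ℤ) ≤ |n| →
        Delta2 a₁ K G (lam n) = 0 ∧ ‖lam n - ((n : ℂ) - 1 / 2)‖ < 1 / 2 ∧
        ∀ μ : ℂ, ‖μ - ((n : ℂ) - 1 / 2)‖ < 1 / 2 → Delta2 a₁ K G μ = 0 → μ = lam n) ∧
      Tendsto (fun n : ℤ => lam n - ((n : ℂ) - 1 / 2)) cofinite (nhds 0) := by
  have hint {f : ℝ → ℂ} (hf : MemLp f 2 (volume.restrict (Ioo 0 π))) :
      IntervalIntegrable f volume (a₁ / 2) (π - a₁ / 2) :=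
    intervalIntegrable_of_memLp_Ioo one_le_two hf ⟨by linarith, by linarith⟩
      ⟨by linarith, by linarith⟩
  exact Delta2_eigenvalue_asymptotics_general a₁ K G (hint hK) (hint hG)
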